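/- Let n be a positive integer and let a, b ∈ R = 𝔽₂[x]/(xⁿ−1) each have Hamming weight at least two. Then the girth of the Tanner graph T(a,b) is at most 8. -/

import Mathlib

open Polynomial

noncomputable section

/-- `R2 n` is the ring `𝔽₂[x]/(xⁿ − 1)`. -/
abbrev R2 (n : ℕ) : Type := AdjoinRoot (X ^ n - 1 : (ZMod 2)[X])

/-- The image of `x` in `𝔽₂[x]/(xⁿ − 1)`. -/
def xR (n : ℕ) : R2 n := AdjoinRoot.root _

/-- The quotient map `𝔽₂[x] → 𝔽₂[x]/(xⁿ − 1)`. -/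
def mkR (n : ℕ) : (ZMod 2)[X] →+* R2 n := AdjoinRoot.mk _

lemma xR_pow_n (n : ℕ) : xR n ^ n = 1 := by
  have h : (AdjoinRoot.mk (X ^ n - 1 : (ZMod 2)[X])) (X ^ n - 1) = 0 := AdjoinRoot.mk_self
  rw [map_sub, map_pow, AdjoinRoot.mk_X, map_one, sub_eq_zero] at h
  exact h

/-- The unique representative of degree `< n` of an element of `𝔽₂[x]/(xⁿ − 1)` (junk if `n = 0`). -/
def repP {n : ℕ} (u : R2 n) : (ZMod 2)[X] :=
  if h : n = 0 then 0
  else AdjoinRoot.modByMonicHom (by simpa using monic_X_pow_sub_C (1 : ZMod 2) h) u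

/-- The Hamming weight of an element of `𝔽₂[x]/(xⁿ − 1)`: the number of nonzero coefficients
of its degree-`< n` representative. -/
def wt {n : ℕ} (u : R2 n) : ℕ := (repP u).support.card

/-- Coefficient of the degree-`< n` representative, indexed by `ℤ/n`. -/
def coeffZ {n : ℕ} (u : R2 n) (i : ZMod n) : ZMod 2 := (repP u).coeff i.val

/-- The X-stabilizer space `C₂(a,b) = {(r·a, r·b) : r ∈ R}` of the GB code of `(a,b)`. -/
def C2set (n : ℕ) (a b : R2 n) : Set (R2 n × R2 n) := {p | ∃ r : R2 n, p = (r * a, r * b)}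

/-- The space `C₁(a,b) = {(u,v) : u·b + v·a = 0}` of the GB code of `(a,b)`. -/
def C1set (n : ℕ) (a b : R2 n) : Set (R2 n × R2 n) := {p | p.1 * b + p.2 * a = 0}

/-- The (X-side) minimum distance of the GB code of `(a,b)`. -/
def dGB (n : ℕ) (a b : R2 n) : ℕ :=
  sInf {k | ∃ p ∈ C1set n a b \ C2set n a b, wt p.1 + wt p.2 = k}

/-- `P_m(x) = 1 + x + ⋯ + x^{m−1}` as a polynomial over `𝔽₂`. -/
def PmP (m : ℕ) : (ZMod 2)[X] := ∑ i ∈ Finset.range m, X ^ i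

/-- `P_m(x) = 1 + x + ⋯ + x^{m−1}` as an element of `𝔽₂[x]/(xⁿ − 1)`. -/
def PmR (n m : ℕ) : R2 n := ∑ i ∈ Finset.range m, xR n ^ i

/-- The ring endomorphism of `𝔽₂[x]/(xⁿ − 1)` induced by `x ↦ x^d`. -/
def substHom (n d : ℕ) : R2 n →+* R2 n :=
  AdjoinRoot.lift (algebraMap (ZMod 2) (R2 n)) (xR n ^ d) (by
    simp only [eval₂_sub, eval₂_X_pow, eval₂_one]
    rw [← pow_mul, mul_comm d n, pow_mul, xR_pow_n, one_pow, sub_self])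

/-- The Euclidean inner product on `𝔽₂²ⁿ`, in terms of pairs `(u₁, u₂)` of elements of
`𝔽₂[x]/(xⁿ − 1)` (representing the concatenated binary vector `(u₁ | u₂)`). -/
def eucInner (n : ℕ) (p q : R2 n × R2 n) : ZMod 2 :=
  ∑ i ∈ Finset.range n,
    ((repP p.1).coeff i * (repP q.1).coeff i + (repP p.2).coeff i * (repP q.2).coeff i)

/-- The symplectic inner product of `u₁ + w·u₂` and `v₁ + w·v₂`, i.e.
`Σᵢ (u₁ᵢ·v₂ᵢ + u₂ᵢ·v₁ᵢ)`, in terms of the pairs `(u₁,u₂)`, `(v₁,v₂)`. -/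
def sympInner (n : ℕ) (p q : R2 n × R2 n) : ZMod 2 :=
  ∑ i ∈ Finset.range n,
    ((repP p.1).coeff i * (repP q.2).coeff i + (repP p.2).coeff i * (repP q.1).coeff i)

/-- Euclidean dual of a set of (pairs representing) binary vectors of length `2n`. -/
def eucDual (n : ℕ) (S : Set (R2 n × R2 n)) : Set (R2 n × R2 n) :=
  {p | ∀ q ∈ S, eucInner n q p = 0}

/-- Symplectic dual of a set of (pairs representing) vectors of `𝔽₄ⁿ`. -/
def sympDual (n : ℕ) (S : Set (R2 n × R2 n)) : Set (R2 n × R2 n) :=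
  {p | ∀ q ∈ S, sympInner n q p = 0}

/-- Number of nonzero `𝔽₄`-coordinates of `u₁ + w·u₂`, in terms of the pair `(u₁,u₂)`. -/
def wt4 (n : ℕ) (p : R2 n × R2 n) : ℕ := ((repP p.1).support ∪ (repP p.2).support).card

/-- The `2n` binary coordinates of a pair `(u₁,u₂)`. -/
def coords {n : ℕ} (p : R2 n × R2 n) : (Fin n ⊕ Fin n) → ZMod 2 :=
  Sum.elim (fun i => (repP p.1).coeff i) (fun i => (repP p.2).coeff i)

/-- Vertex set of the Tanner graph: check vertices `x_t` (left) and data vertices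
`q_s`, `q'_s` (right). -/
def TV (n : ℕ) : Type := (ZMod n) ⊕ ((ZMod n) ⊕ (ZMod n))

/-- `trel a b v w` holds iff `v` is a check vertex `x_t`, `w` is a data vertex, and they are
connected: `x_t ~ q_s` iff `a_{s−t} = 1`, and `x_t ~ q'_s` iff `b_{s−t} = 1`. -/
def trel {n : ℕ} (a b : R2 n) (v w : TV n) : Prop :=
  ∃ t s : ZMod n, v = Sum.inl t ∧
    ((w = Sum.inr (Sum.inl s) ∧ coeffZ a (s - t) = 1) ∨
     (w = Sum.inr (Sum.inr s) ∧ coeffZ b (s - t) = 1))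

/-- The Tanner graph `T(a,b)` of the GB code of `(a,b)`. -/
def tanner (n : ℕ) (a b : R2 n) : SimpleGraph (TV n) where
  Adj v w := trel a b v w ∨ trel a b w v
  symm := ⟨fun v w h => Or.symm h⟩
  loopless := by
    constructor
    rintro v (⟨t, s, hv, hw⟩ | ⟨t, s, hv, hw⟩) <;>
      rcases hw with ⟨hw, -⟩ | ⟨hw, -⟩ <;> (subst hv; simp at hw)

end

noncomputable section

/-!
Let `j` and `j + u` lie in the support `A` of the first block, and `l` and `v + l` in the support
`B` of the second. The checks `t` and `u + t` share the data vertex `j + u + t` of the first block,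
and the checks `t` and `t + v` share the data vertex `t + v + l` of the second. Since left and right
translations commute, the parallelogram of checks `0, u, u + v, v` is a closed walk with eight
edges. Its four data vertices are distinct, so no edge is repeated, even though opposite corners
may coincide; a closed walk without repeated edges contains a cycle.
-/

section ZigzagWalk

variable {V : Type*} {G : SimpleGraph V} {c d : ℕ → V} (hcd : ∀ i, G.Adj (c i) (d i))
  (hdc : ∀ i, G.Adj (d i) (c (i + 1)))

/-- The walk `c 0, d 0, c 1, d 1, …, c m` of length `2 * m`, alternating between two sequences of
vertices such as the checks and the data vertices of a Tanner graph. -/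
def zigzagWalk : (m : ℕ) → G.Walk (c 0) (c m)
  | 0 => .nil
  | m + 1 => ((zigzagWalk m).concat (hcd m)).concat (hdc m)

lemma length_zigzagWalk (m : ℕ) : (zigzagWalk hcd hdc m).length = 2 * m := by
  induction m with
  | zero => rfl
  | succ m ih => simp only [zigzagWalk, SimpleGraph.Walk.length_concat, ih]; ring

lemma mem_edges_zigzagWalk {m : ℕ} {e : Sym2 V} :
    e ∈ (zigzagWalk hcd hdc m).edges ↔ ∃ i < m, e = s(c i, d i) ∨ e = s(d i, c (i + 1)) := by
  induction m with
  | zero => simp [zigzagWalk]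
  | succ m ih =>
    simp only [zigzagWalk, SimpleGraph.Walk.edges_concat, List.concat_eq_append, List.mem_append,
      List.mem_singleton, ih, Nat.exists_lt_succ_right, or_assoc]

-- An edge has exactly one endpoint among the `d i`, so only the two edges at a common `d i` could
-- coincide, and their other endpoints `c i` and `c (i + 1)` differ.
lemma isTrail_zigzagWalk {m : ℕ} (hd : Set.InjOn d (Set.Iio m)) (hc : ∀ i, c i ≠ c (i + 1))
    (hdisj : ∀ i j, c i ≠ d j) : (zigzagWalk hcd hdc m).IsTrail := by
  induction m with
  | zero => exact .nil
  | succ m ih =>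
    have hd_ne : ∀ i < m, d i ≠ d m := fun i hi h =>
      hi.ne (hd (hi.trans m.lt_succ_self) m.lt_succ_self h)
    have hfst : s(c m, d m) ∉ (zigzagWalk hcd hdc m).edges := by
      simp only [mem_edges_zigzagWalk, Sym2.eq_iff]
      grind
    have hsnd : s(d m, c (m + 1)) ∉ (zigzagWalk hcd hdc m).edges := by
      simp only [mem_edges_zigzagWalk, Sym2.eq_iff]
      grind
    have hne : s(c m, d m) ≠ s(d m, c (m + 1)) := by
      simp only [ne_eq, Sym2.eq_iff]
      grind
    have hinit := (ih (hd.mono (Set.Iio_subset_Iio m.le_succ))).edges_nodup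
    rw [SimpleGraph.Walk.isTrail_def]
    simp only [zigzagWalk, SimpleGraph.Walk.edges_concat, List.concat_eq_append,
      List.nodup_append, List.mem_append, List.mem_singleton, List.nodup_singleton]
    grind

end ZigzagWalk

theorem egirth_le_two_mul_of_zigzag {V : Type*} {G : SimpleGraph V} {m : ℕ} [NeZero m]
    {c d : ZMod m → V} (hcd : ∀ i, G.Adj (c i) (d i)) (hdc : ∀ i, G.Adj (d i) (c (i + 1)))
    (hd : Function.Injective d) (hc : ∀ i, c i ≠ c (i + 1)) (hdisj : ∀ i j, c i ≠ d j) :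
    G.egirth ≤ 2 * m := by
  have hcd' (i : ℕ) : G.Adj (c i) (d i) := hcd i
  have hdc' (i : ℕ) : G.Adj (d i) (c (i + 1 : ℕ)) := by simpa using hdc i
  have hd' : Set.InjOn (fun i : ℕ => d i) (Set.Iio m) := fun i hi j hj h =>
    Nat.ModEq.eq_of_lt_of_lt ((ZMod.natCast_eq_natCast_iff i j m).mp (hd h)) hi hj
  let w := (zigzagWalk hcd' hdc' m).copy rfl (by simp : c m = c (0 : ℕ))
  have hlength : w.length = 2 * m := by simp [w, length_zigzagWalk]
  have htrail : w.IsTrail := by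
    simpa [w] using isTrail_zigzagWalk hcd' hdc' hd' (fun i => by simpa using hc i)
      (fun _ _ => hdisj _ _)
  have hcircuit : w.IsCircuit :=
    ⟨htrail, fun h => by simp [h, eq_comm, NeZero.ne m] at hlength⟩
  exact_mod_cast hlength ▸ hcircuit.egirth_le_length

section TwoBlock

variable {Γ : Type*} [AddGroup Γ]

/-- Incidence of checks with data vertices in the two-block code over a group `Γ`, written
additively but not assumed commutative: the check `t` meets the first block in `A + t` and the
second block in `t + B`. -/
def TwoBlockIncidence (A B : Set Γ) : Γ → Γ ⊕ Γ → Prop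
  | t, .inl s => s - t ∈ A
  | t, .inr s => -t + s ∈ B

/-- The Tanner graph of the two-block code over `Γ` whose blocks are supported on `A` and `B`, with
the checks as left summand and the two blocks of data vertices as right summand. -/
def twoBlockTannerGraph (A B : Set Γ) : SimpleGraph (Γ ⊕ (Γ ⊕ Γ)) where
  Adj
    | .inl t, .inr q => TwoBlockIncidence A B t q
    | .inr q, .inl t => TwoBlockIncidence A B t q
    | _, _ => False
  symm := ⟨by rintro (_ | _) (_ | _) <;> exact id⟩
  loopless := ⟨by rintro (_ | _) <;> exact id⟩

theorem stmt_18_general {A B : Set Γ} (hA : A.Nontrivial) (hB : B.Nontrivial) :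
    (twoBlockTannerGraph A B).egirth ≤ 8 := by
  obtain ⟨i, hi, j, hj, hij⟩ := hA
  obtain ⟨k, hk, l, hl, hkl⟩ := hB
  obtain ⟨u, rfl⟩ : ∃ u, j + u = i := ⟨-j + i, add_neg_cancel_left j i⟩
  obtain ⟨v, rfl⟩ : ∃ v, v + l = k := ⟨k - l, sub_add_cancel k l⟩
  have hu : u ≠ 0 := by simpa using hij
  have hv : v ≠ 0 := by simpa using hkl
  let check : ZMod 4 → Γ := ![0, u, u + v, v]
  let next : ZMod 4 → Γ := ![u, u + v, v, 0]
  let data : ZMod 4 → Γ ⊕ Γ := ![.inl (j + u), .inr (u + v + l), .inl (j + u + v), .inr (v + l)]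
  have hnext (r : ZMod 4) : check (r + 1) = next r := by fin_cases r <;> rfl
  have hcd (r : ZMod 4) : TwoBlockIncidence A B (check r) (data r) := by
    fin_cases r <;> simpa [check, data, TwoBlockIncidence, sub_eq_add_neg, add_assoc]
  have hdc (r : ZMod 4) : TwoBlockIncidence A B (check (r + 1)) (data r) := by
    rw [hnext]
    fin_cases r <;> simpa [next, data, TwoBlockIncidence, sub_eq_add_neg, add_assoc]
  have hdata : Function.Injective data := by
    intro r s hrs
    fin_cases r <;> fin_cases s <;> first | rfl | simp [data, add_assoc, hu, hv] at hrs
  have hcheck (r : ZMod 4) : check r ≠ check (r + 1) := by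
    rw [hnext]
    fin_cases r <;> simp [check, next, hu, hu.symm, hv]
  exact egirth_le_two_mul_of_zigzag (m := 4) (c := .inl ∘ check) (d := .inr ∘ data) hcd hdc
    (Sum.inr_injective.comp hdata) (fun r => Sum.inl_injective.ne (hcheck r))
    (fun _ _ => Sum.inl_ne_inr)

end TwoBlock

section GeneralizedBicycle

variable {n : ℕ}

/-- The support of an element of `𝔽₂[x]/(xⁿ − 1)`, as a set of exponents modulo `n`; these
sets are the connection sets of the Tanner graph. -/
def coeffSupport (u : R2 n) : Set (ZMod n) := {i | coeffZ u i = 1}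

lemma degree_repP_lt (u : R2 n) : (repP u).degree < n := by
  obtain rfl | hn := eq_or_ne n 0
  · simp [repP]
  · have hmonic : (X ^ n - 1 : (ZMod 2)[X]).Monic := monic_X_pow_sub_C 1 hn
    obtain ⟨p, rfl⟩ := AdjoinRoot.mk_surjective u
    rw [repP, dif_neg hn, AdjoinRoot.modByMonicHom_mk]
    exact (degree_modByMonic_lt p hmonic).trans_eq
      (degree_X_pow_sub_C (Nat.pos_of_ne_zero hn) 1)

lemma lt_of_mem_support_repP {u : R2 n} {k : ℕ} (hk : k ∈ (repP u).support) : k < n := by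
  exact_mod_cast (le_degree_of_mem_supp k hk).trans_lt (degree_repP_lt u)

lemma natCast_mem_coeffSupport {u : R2 n} {k : ℕ} (hk : k ∈ (repP u).support) :
    (k : ZMod n) ∈ coeffSupport u := by
  rw [coeffSupport, Set.mem_ofPred_eq, coeffZ, ZMod.val_natCast_of_lt (lt_of_mem_support_repP hk)]
  exact (by decide : ∀ c : ZMod 2, c ≠ 0 → c = 1) _ (mem_support_iff.mp hk)

lemma nontrivial_coeffSupport {u : R2 n} (hu : 2 ≤ wt u) : (coeffSupport u).Nontrivial := by
  obtain ⟨k, hk, l, hl, hkl⟩ := Finset.one_lt_card.mp hu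
  refine ⟨k, natCast_mem_coeffSupport hk, l, natCast_mem_coeffSupport hl, fun h => hkl ?_⟩
  exact ((ZMod.natCast_eq_natCast_iff k l n).mp h).eq_of_lt_of_lt
    (lt_of_mem_support_repP hk) (lt_of_mem_support_repP hl)

lemma tanner_eq_twoBlockTannerGraph (a b : R2 n) :
    tanner n a b = twoBlockTannerGraph (coeffSupport a) (coeffSupport b) := by
  ext v w
  unfold TV at v w
  rcases v with t | q | q <;> rcases w with t' | q' | q' <;>
    simp [tanner, trel, TV, twoBlockTannerGraph, TwoBlockIncidence, coeffSupport, neg_add_eq_sub]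

end GeneralizedBicycle

/-- If `a` and `b` both have Hamming weight at least two, then the
Tanner graph `T(a,b)` has girth at most `8`. -/
theorem stmt_18 (n : ℕ) (hn : 0 < n) (a b : R2 n) (ha : 2 ≤ wt a) (hb : 2 ≤ wt b) :
    (tanner n a b).egirth ≤ 8 := by
  rw [tanner_eq_twoBlockTannerGraph]
  exact stmt_18_general (nontrivial_coeffSupport ha) (nontrivial_coeffSupport hb)

end
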